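/- For every finite alphabet 𝒜 with at least two symbols there exist a sequence (X_k)_{k≥1} of shift spaces over 𝒜, each consisting of a single periodic orbit, and an ergodic σ-invariant Borel probability measure μ on 𝒜^∞ with full support, such that d̄_M^H(M_σ(X_k), {μ}) → 0 as k → ∞. In particular, there exists no shift space X ⊆ 𝒜^∞ with M_σ(X) = {μ}. -/

import Mathlib

open MeasureTheory Filter Topology

namespace DbarPaper

variable {A : Type} [Fintype A] [DecidableEq A] [Inhabited A]
  [TopologicalSpace A] [DiscreteTopology A]
  [MeasurableSpace A] [MeasurableSingletonClass A]

/-- The shift map on the full shift `𝒜^∞ = ℕ → A`. -/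
def shift : (ℕ → A) → (ℕ → A) := fun x n => x (n + 1)

/-- A shift space: a nonempty, closed, shift-invariant subset of the full shift. -/
def ShiftSpace (X : Set (ℕ → A)) : Prop :=
  X.Nonempty ∧ IsClosed X ∧ ∀ x ∈ X, shift x ∈ X

/-- The word `w` appears in the sequence `x`. -/
def occursIn (w : List A) (x : ℕ → A) : Prop :=
  ∃ i : ℕ, w = List.ofFn (fun k : Fin w.length => x (i + (k : ℕ)))

/-- The language of a set `X`: all finite words appearing in points of `X`. -/
def lang (X : Set (ℕ → A)) : Set (List A) := {w | ∃ x ∈ X, occursIn w x}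

/-- Words of length `n` in the language of `X`. -/
def langN (n : ℕ) (X : Set (ℕ → A)) : Set (List A) := {w | w ∈ lang X ∧ w.length = n}

/-- The pseudometric `d̄` on the full shift. -/
noncomputable def dbar (x y : ℕ → A) : ℝ :=
  Filter.limsup
    (fun n => (((Finset.range n).filter (fun j => x j ≠ y j)).card : ℝ) / (n : ℝ))
    Filter.atTop

/-- Hausdorff "distance" between two sets induced by a `ℝ`-valued distance. -/
noncomputable def hausdist {Z : Type*} (d : Z → Z → ℝ) (P Q : Set Z) : ℝ :=
  max (⨆ p : P, ⨅ q : Q, d p q) (⨆ q : Q, ⨅ p : P, d p q)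

/-- A probability measure is shift-invariant. -/
def invariantPM (μ : ProbabilityMeasure (ℕ → A)) : Prop :=
  (μ : Measure (ℕ → A)).map shift = (μ : Measure (ℕ → A))

/-- `M_σ(X)`: shift-invariant Borel probability measures giving `X` full measure. -/
def Msigma (X : Set (ℕ → A)) : Set (ProbabilityMeasure (ℕ → A)) :=
  {μ | invariantPM μ ∧ μ X = 1}

/-- `ξ` is a joining of `μ` and `ν`: a `σ×σ`-invariant measure on the product with
marginals `μ` and `ν`. -/
def IsJoining (ξ : Measure ((ℕ → A) × (ℕ → A))) (μ ν : ProbabilityMeasure (ℕ → A)) : Prop :=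
  ξ.map (Prod.map shift shift) = ξ ∧
  ξ.map Prod.fst = (μ : Measure (ℕ → A)) ∧ ξ.map Prod.snd = (ν : Measure (ℕ → A))

/-- Ornstein's metric `d̄_M` on invariant measures. -/
noncomputable def dbarM (μ ν : ProbabilityMeasure (ℕ → A)) : ℝ :=
  sInf {r : ℝ | ∃ ξ : Measure ((ℕ → A) × (ℕ → A)),
    IsJoining ξ μ ν ∧ r = (ξ {p | p.1 0 ≠ p.2 0}).toReal}

/-- `d̄_M`-stability of a shift space (Austin). -/
def DbarMStable (X : Set (ℕ → A)) : Prop :=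
  ∀ ε : ℝ, 0 < ε → ∃ U : Set (ProbabilityMeasure (ℕ → A)), IsOpen U ∧ Msigma X ⊆ U ∧
    ∀ ν ∈ U, invariantPM ν → ∃ μ ∈ Msigma X, dbarM μ ν < ε

/-- The infinite concatenation of a sequence of (nonempty) words. -/
def concatSeq (w : ℕ → List A) : ℕ → A := fun n =>
  ((List.ofFn (fun i : Fin (n + 1) => w (i : ℕ))).flatten).getD n default

/-- The `d̄`-shadowing property. -/
def DbarShadowing (X : Set (ℕ → A)) : Prop :=
  ∀ ε : ℝ, 0 < ε → ∃ N : ℕ, 0 < N ∧ ∀ w : ℕ → List A,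
    (∀ j, w j ∈ lang X) → (∀ j, N ≤ (w j).length) →
    ∃ x' ∈ X, dbar (concatSeq w) x' < ε

/-- `U_n(X)`: the union of cylinders of words of length `n` in the language of `X`. -/
def cylNbhd (X : Set (ℕ → A)) (n : ℕ) : Set (ℕ → A) :=
  {x | List.ofFn (fun k : Fin n => x (k : ℕ)) ∈ lang X}

/-- The `n`-th (topological) Markov approximation of `X`: all sequences whose subwords of
length `n+1` belong to the language of `X`. -/
def markovApprox (X : Set (ℕ → A)) (n : ℕ) : Set (ℕ → A) :=
  {x | ∀ i : ℕ, List.ofFn (fun k : Fin (n + 1) => x (i + (k : ℕ))) ∈ lang X}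

/-- Transitivity, in terms of the language. -/
def TransitiveShift (X : Set (ℕ → A)) : Prop :=
  ∀ u ∈ lang X, ∀ w ∈ lang X, ∃ v : List A, u ++ v ++ w ∈ lang X

/-- Topological mixing, in terms of the language. -/
def MixingShift (X : Set (ℕ → A)) : Prop :=
  ∀ u ∈ lang X, ∀ w ∈ lang X, ∃ N : ℕ, ∀ m : ℕ, N ≤ m →
    ∃ v : List A, v.length = m ∧ u ++ v ++ w ∈ lang X

/-- Chain mixing: all but finitely many Markov approximations are topologically mixing. -/
def ChainMixing (X : Set (ℕ → A)) : Prop :=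
  ∃ N : ℕ, ∀ n : ℕ, N ≤ n → MixingShift (markovApprox X n)

/-- `C` is the measure center of `X`: the smallest shift space contained in `X` of full
measure for every invariant measure of `X`. -/
def IsMeasureCenter (X C : Set (ℕ → A)) : Prop :=
  ShiftSpace C ∧ C ⊆ X ∧ (∀ μ ∈ Msigma X, μ C = 1) ∧
  ∀ Y : Set (ℕ → A), ShiftSpace Y → Y ⊆ X → (∀ μ ∈ Msigma X, μ Y = 1) → C ⊆ Y

/-- Measure of the cylinder determined by a word of length `n`. -/
noncomputable def cylMeasure (μ : ProbabilityMeasure (ℕ → A)) {n : ℕ} (w : Fin n → A) : ℝ :=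
  ((μ : Measure (ℕ → A)) {x | ∀ k : Fin n, x (k : ℕ) = w k}).toReal

/-- Entropy of the partition into cylinders of length `n`. -/
noncomputable def blockEntropy (μ : ProbabilityMeasure (ℕ → A)) (n : ℕ) : ℝ :=
  -∑ w : Fin n → A, cylMeasure μ w * Real.log (cylMeasure μ w)

/-- Kolmogorov–Sinai entropy of a shift-invariant measure. -/
noncomputable def ksEntropy (μ : ProbabilityMeasure (ℕ → A)) : ℝ :=
  Filter.limsup (fun n => blockEntropy μ n / (n : ℝ)) Filter.atTop

/-- `μ` is ergodic for the shift. -/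
def ErgodicPM (μ : ProbabilityMeasure (ℕ → A)) : Prop :=
  Ergodic shift (μ : Measure (ℕ → A))

/-- Ergodic measures are entropy dense in `M_σ(X)`. -/
def EntropyDense (X : Set (ℕ → A)) : Prop :=
  ∀ μ ∈ Msigma X, ∀ U : Set (ProbabilityMeasure (ℕ → A)), IsOpen U → μ ∈ U →
    ∀ ε : ℝ, 0 < ε →
      ∃ ν ∈ Msigma X, ν ∈ U ∧ ErgodicPM ν ∧ |ksEntropy ν - ksEntropy μ| < ε

/-- Topological entropy of a shift space. -/
noncomputable def topEntropy (X : Set (ℕ → A)) : ℝ :=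
  Filter.limsup (fun n => Real.log (Nat.card ↥(langN n X)) / (n : ℝ)) Filter.atTop

/-- The standard metric on the full shift. -/
noncomputable def rho (x y : ℕ → A) : ℝ :=
  open scoped Classical in
  if x = y then 0 else (2 : ℝ) ^ (-((sInf {j : ℕ | x j ≠ y j} : ℕ) : ℤ))

/-- Proximality of a shift space. -/
def ProximalShift (X : Set (ℕ → A)) : Prop :=
  ∀ x ∈ X, ∀ y ∈ X,
    Filter.liminf (fun n => rho (shift^[n] x) (shift^[n] y)) Filter.atTop = 0

/-- Minimality of a shift space. -/
def MinimalShift (X : Set (ℕ → A)) : Prop :=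
  ShiftSpace X ∧ ∀ Y : Set (ℕ → A), ShiftSpace Y → Y ⊆ X → Y = X

/-- An `A`-labeled directed multigraph on vertices `V` with edges `E`. -/
structure LabeledGraph (A V E : Type*) where
  src : E → V
  dst : E → V
  lab : E → A

namespace LabeledGraph

variable {A' V E : Type*}

/-- `es` is a path in `G` from `u` to `v`. -/
def PathFromTo (G : LabeledGraph A' V E) (es : List E) (u v : V) : Prop :=
  es.Chain' (fun e f => G.dst e = G.src f) ∧
  es.head?.map G.src = some u ∧ es.getLast?.map G.dst = some v

/-- `G` is strongly connected. -/
def StronglyConnected (G : LabeledGraph A' V E) : Prop :=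
  ∀ u v : V, ∃ es : List E, G.PathFromTo es u v

/-- `d` is the period of `G`: the gcd of lengths of closed paths. -/
def HasPeriod (G : LabeledGraph A' V E) (d : ℕ) : Prop :=
  (∀ (es : List E) (u : V), G.PathFromTo es u u → d ∣ es.length) ∧
  ∀ d' : ℕ, (∀ (es : List E) (u : V), G.PathFromTo es u u → d' ∣ es.length) → d' ∣ d

/-- `b` is a safe symbol for `G`. -/
def SafeSymbol (G : LabeledGraph A' V E) (b : A') : Prop :=
  ∀ e : E, ∃ e' : E, G.src e' = G.src e ∧ G.dst e' = G.dst e ∧ G.lab e' = b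

/-- The shift space presented by the labeled graph `G`: labels read along infinite paths. -/
def presents (G : LabeledGraph A' V E) : Set (ℕ → A') :=
  {x | ∃ e : ℕ → E, (∀ j, G.dst (e j) = G.src (e (j + 1))) ∧ ∀ j, x j = G.lab (e j)}

end LabeledGraph

/-- The coupling of a family of labeled graphs: an edge labeled `a` from `v` to `v'` exists
iff each `G k` has an edge from `v k` to `v' k` labeled `a`. -/
def coupling {A' : Type*} {n : ℕ} {V E : Fin n → Type*}
    (G : ∀ k, LabeledGraph A' (V k) (E k)) :
    LabeledGraph A' (∀ k, V k) {p : (∀ k, E k) × A' // ∀ k, (G k).lab (p.1 k) = p.2} where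
  src p := fun k => (G k).src (p.1.1 k)
  dst p := fun k => (G k).dst (p.1.1 k)
  lab p := p.1.2

/-- Sofic shift spaces: those presented by some finite labeled graph. -/
def Sofic (X : Set (ℕ → A)) : Prop :=
  ∃ (V E : Type) (_ : Fintype V) (_ : Fintype E) (G : LabeledGraph A V E),
    X = G.presents

/-- The coded shift generated by a finite set of words `B`: the closure of the set of all
shifts of infinite concatenations of words from `B`. -/
def codedShift (B : Finset (List A)) : Set (ℕ → A) :=
  closure {x | ∃ (b : ℕ → List A) (k : ℕ), (∀ i, b i ∈ B) ∧ x = shift^[k] (concatSeq b)}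


/-! ### The 2-adic odometer -/

/-- The residue of a 2-adic integer modulo `2 ^ n`, as a natural number. -/
noncomputable def residue (n : ℕ) (ω : ℤ_[2]) : ℕ := (PadicInt.toZModPow n ω).val

lemma residue_lt (n : ℕ) (ω : ℤ_[2]) : residue n ω < 2 ^ n := ZMod.val_lt _

lemma toZModPow_two_pow_mul {n N : ℕ} (h : n ≤ N) (z : ℤ_[2]) :
    PadicInt.toZModPow n (2 ^ N * z) = 0 := by
  rw [← RingHom.mem_ker, PadicInt.ker_toZModPow, Ideal.mem_span_singleton]
  exact (pow_dvd_pow _ h).mul_right z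

lemma residue_add_two_pow_mul {n N : ℕ} (h : n ≤ N) (ω z : ℤ_[2]) :
    residue n (ω + 2 ^ N * z) = residue n ω := by
  rw [residue, map_add, toZModPow_two_pow_mul h, add_zero, residue]

lemma residue_add_natCast {n i : ℕ} {ω : ℤ_[2]} (h : residue n ω + i < 2 ^ n) :
    residue n (ω + i) = residue n ω + i := by
  have hi : (i : ZMod (2 ^ n)).val = i := ZMod.val_natCast_of_lt (by omega)
  have h' : (PadicInt.toZModPow n ω).val + (i : ZMod (2 ^ n)).val < 2 ^ n := by
    rw [hi]; exact h
  rw [residue, map_add, map_natCast, ZMod.val_add_of_lt h', hi, residue]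

lemma exists_eq_natCast_add_two_pow_mul (N : ℕ) (ω : ℤ_[2]) :
    ∃ (j : ℕ) (z : ℤ_[2]), ω = j + 2 ^ N * z := by
  obtain ⟨z, hz⟩ := Ideal.mem_span_singleton.1 (PadicInt.appr_spec N ω)
  refine ⟨ω.appr N, z, ?_⟩
  rw [← sub_eq_iff_eq_add']
  exact hz

lemma continuous_residue (n : ℕ) : Continuous (residue n) := by
  refine (IsLocallyConstant.iff_exists_open _).2 (fun ω => ?_) |>.continuous
  refine ⟨Metric.ball ω ((2 : ℝ) ^ (-n : ℤ)), Metric.isOpen_ball,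
    Metric.mem_ball_self (by positivity), fun y hy => ?_⟩
  rw [Metric.mem_ball, dist_eq_norm] at hy
  obtain ⟨z, hz⟩ := Ideal.mem_span_singleton.1
    ((PadicInt.norm_le_pow_iff_mem_span_pow (p := 2) (y - ω) n).1 (by exact_mod_cast hy.le))
  rw [sub_eq_iff_eq_add'] at hz
  rw [hz]
  exact residue_add_two_pow_mul le_rfl ω z

section OdometerMeasure

variable [MeasurableSpace ℤ_[2]] [BorelSpace ℤ_[2]]

lemma measurable_residue (n : ℕ) : Measurable (residue n) := (continuous_residue n).measurable

variable (m : Measure ℤ_[2]) [IsProbabilityMeasure m] [m.IsAddLeftInvariant]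

lemma measure_residue_eq {n c : ℕ} (hc : c < 2 ^ n) :
    m (residue n ⁻¹' {c}) = ((2 : ENNReal) ^ n)⁻¹ := by
  have hinv : ∀ i < 2 ^ n, m (residue n ⁻¹' {i}) = m (residue n ⁻¹' {0}) := by
    intro i hi
    have hpre : (fun ω : ℤ_[2] => (i : ℤ_[2]) + ω) ⁻¹' (residue n ⁻¹' {i})
        = residue n ⁻¹' {0} := by
      ext ω
      have hi' : (i : ZMod (2 ^ n)).val = i := ZMod.val_natCast_of_lt hi
      have : residue n (i + ω) = i ↔ (i : ZMod (2 ^ n)) + PadicInt.toZModPow n ω = i := by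
        rw [residue, map_add, map_natCast]
        conv_lhs => rhs; rw [← hi']
        exact (ZMod.val_injective _).eq_iff
      simp only [Set.mem_preimage, Set.mem_singleton_iff, this, add_eq_left]
      rw [residue, ZMod.val_eq_zero]
    rw [← hpre, measure_preimage_add]
  have hsum := sum_measure_preimage_singleton (μ := m) (Finset.range (2 ^ n)) (f := residue n)
    (fun y _ => measurable_residue n (measurableSet_singleton y))
  have huniv : residue n ⁻¹' (Finset.range (2 ^ n) : Set ℕ) = Set.univ := by
    ext ω; simp [residue_lt]
  rw [huniv, measure_univ, Finset.sum_congr rfl fun i hi => hinv i (Finset.mem_range.1 hi)] at hsum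
  rw [hinv c hc]
  refine ENNReal.eq_inv_of_mul_eq_one_left ?_
  simpa [mul_comm] using hsum

lemma measure_residue_lt_le (n c : ℕ) :
    m {ω | residue n ω < c} ≤ c * ((2 : ENNReal) ^ n)⁻¹ := by
  have hset : {ω | residue n ω < c} = residue n ⁻¹' (Finset.range c : Set ℕ) := by
    ext ω; simp
  rw [hset, ← sum_measure_preimage_singleton _
    (fun y _ => measurable_residue n (measurableSet_singleton y))]
  refine (Finset.sum_le_card_nsmul _ _ ((2 : ENNReal) ^ n)⁻¹ fun i _ => ?_).trans (by simp)
  by_cases hi : i < 2 ^ n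
  · exact (measure_residue_eq m hi).le
  · have : residue n ⁻¹' {i} = ∅ := by
      ext ω
      simp only [Set.mem_preimage, Set.mem_singleton_iff, Set.mem_empty_iff_false, iff_false]
      rintro rfl
      exact hi (residue_lt n ω)
    simp [this]

lemma ergodic_one_add [m.InnerRegular] : Ergodic (fun ω : ℤ_[2] => 1 + ω) m := by
  refine ergodic_add_left_of_denseRange_nsmul ?_ m
  simpa using PadicInt.denseRange_natCast (p := 2)

end OdometerMeasure

section Arithmetic

lemma mul_mul_two_pow_le {k j : ℕ} (h : k < j) :
    k * j * 2 ^ (4 * k ^ 2) * 4 ^ j ≤ 2 ^ (4 * j ^ 2) := by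
  have hk : k ≤ 2 ^ j := (h.trans Nat.lt_two_pow_self).le
  have hj : j ≤ 2 ^ j := Nat.lt_two_pow_self.le
  have hexp : j + j + 4 * k ^ 2 + 2 * j ≤ 4 * j ^ 2 := by nlinarith
  calc k * j * 2 ^ (4 * k ^ 2) * 4 ^ j
      ≤ 2 ^ j * 2 ^ j * 2 ^ (4 * k ^ 2) * (2 ^ 2) ^ j := by gcongr; norm_num
    _ = 2 ^ (j + j + 4 * k ^ 2 + 2 * j) := by rw [← pow_mul, ← pow_add, ← pow_add, ← pow_add]
    _ ≤ 2 ^ (4 * j ^ 2) := Nat.pow_le_pow_right (by norm_num) hexp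

lemma mul_two_pow_le (j : ℕ) : j * 2 ^ j ≤ 2 ^ (4 * j ^ 2) := by
  have hj : j ≤ 2 ^ j := Nat.lt_two_pow_self.le
  calc j * 2 ^ j ≤ 2 ^ j * 2 ^ j := by gcongr
    _ = 2 ^ (j + j) := by ring
    _ ≤ 2 ^ (4 * j ^ 2) := Nat.pow_le_pow_right (by norm_num) (by nlinarith [sq_nonneg j])

lemma mul_inv_le_of_natCast_mul_le {a b c : ℕ} (hb : b ≠ 0) (hc : c ≠ 0) (h : a * b ≤ c) :
    (a : ENNReal) * (c : ENNReal)⁻¹ ≤ (b : ENNReal)⁻¹ := by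
  rw [← div_eq_mul_inv, ENNReal.div_le_iff (by simpa) (by simp), mul_comm, ← div_eq_mul_inv,
    ENNReal.le_div_iff_mul_le (by simp [hb]) (by simp)]
  exact_mod_cast h

end Arithmetic

/-! ### Iterated overwriting along arithmetic progressions -/

section Pattern

variable {B : Type*} (W : ℕ → ℕ → B) (b : B)

/-- Starting from the constant function `b`, at each stage `k` the first `k` symbols of `W k` are
written on the residues `0, …, k - 1` modulo `2 ^ (4 * k ^ 2)`. -/
noncomputable def pattern : ℕ → ℤ_[2] → B
  | 0, _ => b
  | k + 1, ω => if residue (4 * k ^ 2) ω < k then W k (residue (4 * k ^ 2) ω) else pattern k ω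

lemma pattern_add_two_pow_mul {k N : ℕ} (h : 4 * k ^ 2 ≤ N) (ω z : ℤ_[2]) :
    pattern W b k (ω + 2 ^ N * z) = pattern W b k ω := by
  induction k with
  | zero => rfl
  | succ k ih =>
    have h' : 4 * k ^ 2 ≤ N := le_trans (by gcongr; omega) h
    simp only [pattern, residue_add_two_pow_mul h', ih h']

lemma pattern_eq_of_le {k n : ℕ} {ω : ℤ_[2]} (h : ∀ j ≥ k, j ≤ residue (4 * j ^ 2) ω)
    (hn : k ≤ n) : pattern W b n ω = pattern W b k ω := by
  induction n, hn using Nat.le_induction with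
  | base => rfl
  | succ n hn ih => rw [pattern, if_neg (not_lt.2 (h n hn)), ih]

lemma exists_stabilizes_or (ω : ℤ_[2]) : ∃ n, (∀ j ≥ n, j ≤ residue (4 * j ^ 2) ω) ∨
    ∀ K, ∃ j ≥ K, residue (4 * j ^ 2) ω < j := by
  by_cases h : ∃ n, ∀ j ≥ n, j ≤ residue (4 * j ^ 2) ω
  · obtain ⟨n, hn⟩ := h
    exact ⟨n, .inl hn⟩
  · push Not at h
    exact ⟨0, .inr h⟩

open Classical in
/-- The eventual value of `pattern W b k ω` (whenever `ω` is overwritten finitely often). -/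
noncomputable def patternLim (ω : ℤ_[2]) : B :=
  pattern W b (Nat.find (exists_stabilizes_or ω)) ω

lemma patternLim_eq {k : ℕ} {ω : ℤ_[2]} (h : ∀ j ≥ k, j ≤ residue (4 * j ^ 2) ω) :
    patternLim W b ω = pattern W b k ω := by
  classical
  have hle : Nat.find (exists_stabilizes_or ω) ≤ k := Nat.find_min' _ (.inl h)
  rcases Nat.find_spec (exists_stabilizes_or ω) with hs | hs
  · exact (pattern_eq_of_le W b hs hle).symm
  · obtain ⟨j, hj, hlt⟩ := hs k
    exact absurd (h j hj) (not_le.2 hlt)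

lemma patternLim_add_natCast {k i : ℕ} {ω : ℤ_[2]} (hi : i < k) (h0 : residue (4 * k ^ 2) ω = 0)
    (h : ∀ j > k, j ≤ residue (4 * j ^ 2) (ω + i)) : patternLim W b (ω + i) = W k i := by
  have hlt : i < 2 ^ (4 * k ^ 2) :=
    hi.trans (Nat.lt_two_pow_self.trans_le (Nat.pow_le_pow_right (by norm_num) (by nlinarith)))
  have hres : residue (4 * k ^ 2) (ω + i) = i := by
    rw [residue_add_natCast (by omega), h0, zero_add]
  rw [patternLim_eq W b (k := k + 1) h, pattern, hres, if_pos hi]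

section Measurability

variable [MeasurableSpace ℤ_[2]] [BorelSpace ℤ_[2]]

lemma measurable_pattern [MeasurableSpace B] (k : ℕ) : Measurable (pattern W b k) := by
  induction k with
  | zero => exact measurable_const
  | succ k ih =>
    exact Measurable.ite (measurable_residue _ (Set.to_countable (Set.Iio k)).measurableSet)
      ((measurable_of_countable (W k)).comp (measurable_residue _)) ih

lemma measurable_patternLim [MeasurableSpace B] : Measurable (patternLim W b) := by
  classical
  refine Measurable.find (measurable_pattern W b) (fun n => ?_) exists_stabilizes_or
  have hle : ∀ j : ℕ, MeasurableSet {ω : ℤ_[2] | j ≤ residue (4 * j ^ 2) ω} := fun j =>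
    measurable_residue _ (Set.to_countable (Set.Ici j)).measurableSet
  have hlt : ∀ j : ℕ, MeasurableSet {ω : ℤ_[2] | residue (4 * j ^ 2) ω < j} := fun j =>
    measurable_residue _ (Set.to_countable (Set.Iio j)).measurableSet
  measurability

variable (m : Measure ℤ_[2]) [IsProbabilityMeasure m] [m.IsAddLeftInvariant]

lemma measure_pattern_ne_patternLim_le (k : ℕ) :
    m {ω | pattern W b k ω ≠ patternLim W b ω} ≤ 2 * 2⁻¹ ^ k := by
  have hsub : {ω | pattern W b k ω ≠ patternLim W b ω}
      ⊆ ⋃ l : ℕ, {ω | residue (4 * (k + l) ^ 2) ω < k + l} := by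
    intro ω hω
    by_contra hcon
    simp only [Set.mem_iUnion, Set.mem_ofPred_eq, not_exists, not_lt] at hcon
    refine hω (patternLim_eq W b fun j hj => ?_).symm
    obtain ⟨l, rfl⟩ := Nat.exists_eq_add_of_le hj
    exact hcon l
  calc m {ω | pattern W b k ω ≠ patternLim W b ω}
      ≤ ∑' l : ℕ, m {ω | residue (4 * (k + l) ^ 2) ω < k + l} :=
        (measure_mono hsub).trans (measure_iUnion_le _)
    _ ≤ ∑' l : ℕ, (2⁻¹ : ENNReal) ^ k * 2⁻¹ ^ l := by
        refine ENNReal.tsum_le_tsum fun l => (measure_residue_lt_le m _ _).trans ?_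
        have := mul_inv_le_of_natCast_mul_le (by positivity) (by positivity)
          (mul_two_pow_le (k + l))
        rw [← pow_add, ← ENNReal.inv_pow]
        exact_mod_cast this
    _ = 2 * 2⁻¹ ^ k := by
        rw [ENNReal.tsum_mul_left, ENNReal.tsum_geometric, ENNReal.one_sub_inv_two, inv_inv,
          mul_comm]

lemma measure_patternLim_eq_pos (k : ℕ) :
    0 < m {ω | ∀ i < k, patternLim W b (ω + i) = W k i} := by
  set C : Set ℤ_[2] := residue (4 * k ^ 2) ⁻¹' {0} with hC
  set V : ℕ → Set ℤ_[2] := fun j => {ω | residue (4 * j ^ 2) ω < j} with hV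
  set D : Set ℤ_[2] := ⋃ l : ℕ, ⋃ i ∈ Finset.range k, (fun ω => (i : ℤ_[2]) + ω) ⁻¹' V (k + 1 + l)
    with hD
  have hsub : C \ D ⊆ {ω | ∀ i < k, patternLim W b (ω + i) = W k i} := by
    rintro ω ⟨hωC, hωD⟩ i hi
    refine patternLim_add_natCast W b hi hωC fun j hj => ?_
    obtain ⟨l, rfl⟩ := Nat.exists_eq_add_of_le (Nat.succ_le_of_lt hj)
    by_contra hcon
    refine hωD (Set.mem_iUnion.2 ⟨l, Set.mem_biUnion (Finset.mem_range.2 hi) ?_⟩)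
    simpa [hV, add_comm] using hcon
  have hCm : m C = ((2 : ENNReal) ^ (4 * k ^ 2))⁻¹ := measure_residue_eq m (by positivity)
  have hterm : ∀ l : ℕ, m (⋃ i ∈ Finset.range k, (fun ω => (i : ℤ_[2]) + ω) ⁻¹' V (k + 1 + l))
      ≤ m C * 4⁻¹ ^ (l + 1) := by
    intro l
    calc _ ≤ ∑ i ∈ Finset.range k, m ((fun ω => (i : ℤ_[2]) + ω) ⁻¹' V (k + 1 + l)) :=
          measure_biUnion_finset_le _ _
      _ = k * m (V (k + 1 + l)) := by simp [measure_preimage_add]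
      _ ≤ k * (((k + 1 + l : ℕ) : ENNReal) * ((2 : ENNReal) ^ (4 * (k + 1 + l) ^ 2))⁻¹) := by
          gcongr; exact measure_residue_lt_le m _ _
      _ ≤ ((2 : ENNReal) ^ (4 * k ^ 2) * 4 ^ (k + 1 + l))⁻¹ := by
          have := mul_inv_le_of_natCast_mul_le
            (a := k * (k + 1 + l)) (b := 2 ^ (4 * k ^ 2) * 4 ^ (k + 1 + l))
            (c := 2 ^ (4 * (k + 1 + l) ^ 2)) (by positivity) (by positivity)
            (by rw [← mul_assoc]; exact mul_mul_two_pow_le (by omega))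
          rw [← mul_assoc]
          push_cast at this ⊢
          exact this
      _ ≤ m C * 4⁻¹ ^ (l + 1) := by
          rw [hCm, ← ENNReal.inv_pow, ← ENNReal.mul_inv (by simp) (by simp)]
          refine ENNReal.inv_le_inv.2 ?_
          gcongr _ * ?_
          exact pow_le_pow_right₀ (by norm_num) (by omega)
  have hDC : m D < m C := by
    calc m D ≤ ∑' l : ℕ, m C * 4⁻¹ ^ (l + 1) :=
          (measure_iUnion_le _).trans (ENNReal.tsum_le_tsum hterm)
      _ = m C * ((1 - 4⁻¹)⁻¹ * 4⁻¹) := by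
          rw [ENNReal.tsum_mul_left, ENNReal.tsum_geometric_add_one, mul_comm (4⁻¹ : ENNReal)]
      _ < m C * 1 := by
          refine ENNReal.mul_lt_mul_right (by simp [hCm]) (measure_ne_top _ _) ?_
          have h4 : (1 - 4⁻¹ : ENNReal) = ENNReal.ofReal (3 / 4) := by
            rw [← ENNReal.ofReal_one, ← ENNReal.ofReal_ofNat,
              ← ENNReal.ofReal_inv_of_pos (by norm_num), ← ENNReal.ofReal_sub _ (by norm_num)]
            norm_num
          rw [h4, ← ENNReal.ofReal_inv_of_pos (by norm_num), ← ENNReal.ofReal_ofNat,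
            ← ENNReal.ofReal_inv_of_pos (by norm_num), ← ENNReal.ofReal_mul (by norm_num),
            ← ENNReal.ofReal_one, ENNReal.ofReal_lt_ofReal_iff (by norm_num)]
          norm_num
      _ = m C := mul_one _
  calc 0 < m C - m D := tsub_pos_of_lt hDC
    _ ≤ m (C \ D) := le_measure_sdiff
    _ ≤ _ := measure_mono hsub

end Measurability

end Pattern

/-! ### Measures generated by observables on the odometer -/

section Dynamics

variable {B : Type}

/-- The itinerary of `ω` under the odometer, observed through `g`. -/
noncomputable def itinerary (g : ℤ_[2] → B) (ω : ℤ_[2]) : ℕ → B := fun n => g (ω + n)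

lemma shift_iterate_apply (x : ℕ → B) (j n : ℕ) : shift^[j] x n = x (j + n) := by
  induction j generalizing n with
  | zero => simp
  | succ j ih => rw [Function.iterate_succ_apply', shift, ih]; congr 1; omega

lemma shift_itinerary (g : ℤ_[2] → B) (ω : ℤ_[2]) :
    shift (itinerary g ω) = itinerary g (1 + ω) := by
  funext n
  simp only [shift, itinerary]
  congr 1
  push_cast
  ring

lemma shift_iterate_itinerary_of_periodic {g : ℤ_[2] → B} {N : ℕ}
    (hg : ∀ ω z, g (ω + 2 ^ N * z) = g ω) :
    shift^[2 ^ N] (itinerary g 0) = itinerary g 0 := by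
  funext n
  rw [shift_iterate_apply]
  simp only [itinerary]
  rw [← hg (0 + n) 1]
  congr 1
  push_cast
  ring

lemma measurable_shift [MeasurableSpace B] : Measurable (shift : (ℕ → B) → ℕ → B) :=
  measurable_pi_lambda _ fun n => measurable_pi_apply (n + 1)

section Periodic

lemma finite_orbit {x : ℕ → B} {p : ℕ} (hp : 0 < p) (hx : shift^[p] x = x) :
    {y | ∃ j : ℕ, y = shift^[j] x}.Finite := by
  refine ((Finset.range p).finite_toSet.image fun j => shift^[j] x).subset ?_
  rintro _ ⟨j, rfl⟩
  exact ⟨j % p, by simpa using Nat.mod_lt j hp, Function.IsPeriodicPt.iterate_mod_apply hx j⟩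

lemma shiftSpace_orbit [TopologicalSpace B] [T1Space B] {x : ℕ → B} {p : ℕ}
    (hp : 0 < p) (hx : shift^[p] x = x) :
    ShiftSpace {y | ∃ j : ℕ, y = shift^[j] x} := by
  refine ⟨⟨x, 0, rfl⟩, (finite_orbit hp hx).isClosed, ?_⟩
  rintro _ ⟨j, rfl⟩
  exact ⟨j + 1, (Function.iterate_succ_apply' _ _ _).symm⟩

lemma lintegral_sum_indicator_iterate [MeasurableSpace B] {ν : ProbabilityMeasure (ℕ → B)}
    (hν : invariantPM ν)
    (p : ℕ) {S : Set (ℕ → B)} (hS : MeasurableSet S) :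
    ∫⁻ y, ∑ j ∈ Finset.range p, S.indicator (1 : (ℕ → B) → ENNReal) (shift^[j] y)
        ∂(ν : Measure (ℕ → B)) = p * (ν : Measure (ℕ → B)) S := by
  have hmp : MeasurePreserving shift (ν : Measure (ℕ → B)) ν := ⟨measurable_shift, hν⟩
  have hind : Measurable (S.indicator (1 : (ℕ → B) → ENNReal)) := measurable_one.indicator hS
  rw [lintegral_finsetSum (f := fun j y => S.indicator (1 : (ℕ → B) → ENNReal) (shift^[j] y)) _
    fun j _ => hind.comp (measurable_shift.iterate j)]
  simp_rw [fun j => (hmp.iterate j).lintegral_comp hind,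
    lintegral_indicator_one hS]
  simp

lemma sum_indicator_iterate_eq {x : ℕ → B} {p : ℕ} (hx : shift^[p] x = x) (S : Set (ℕ → B))
    (i : ℕ) :
    ∑ j ∈ Finset.range p, S.indicator (1 : (ℕ → B) → ENNReal) (shift^[j] (shift^[i] x))
      = ∑ j ∈ Finset.range p, S.indicator (1 : (ℕ → B) → ENNReal) (shift^[j] x) := by
  induction i with
  | zero => rfl
  | succ i ih =>
    rw [← ih]
    have hper : shift^[p] (shift^[i] x) = shift^[i] x :=
      Function.IsPeriodicPt.apply_iterate hx i
    have h1 := Finset.sum_range_succ'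
      (fun j => S.indicator (1 : (ℕ → B) → ENNReal) (shift^[j] (shift^[i] x))) p
    have h2 := Finset.sum_range_succ
      (fun j => S.indicator (1 : (ℕ → B) → ENNReal) (shift^[j] (shift^[i] x))) p
    rw [h2, hper] at h1
    simp only [Function.iterate_zero, id_eq, Function.iterate_succ_apply] at h1
    rw [Function.iterate_succ_apply']
    refine ((ENNReal.add_left_inj ?_).1 h1).symm
    exact ne_top_of_le_ne_top ENNReal.one_ne_top (Set.indicator_le_self' (by simp) _)

lemma Msigma_orbit_subsingleton [MeasurableSpace B] [MeasurableSingletonClass B]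
    {x : ℕ → B} {p : ℕ} (hp : 0 < p) (hx : shift^[p] x = x) :
    (Msigma {y | ∃ j : ℕ, y = shift^[j] x}).Subsingleton := by
  have key : ∀ ν ∈ Msigma {y | ∃ j : ℕ, y = shift^[j] x}, ∀ S, MeasurableSet S →
      p * (ν : Measure (ℕ → B)) S
        = ∑ j ∈ Finset.range p, S.indicator (1 : (ℕ → B) → ENNReal) (shift^[j] x) := by
    rintro ν ⟨hinv, hfull⟩ S hS
    rw [← lintegral_sum_indicator_iterate hinv p hS]
    have hae : ∀ᵐ y ∂(ν : Measure (ℕ → B)), y ∈ {y | ∃ j : ℕ, y = shift^[j] x} := by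
      have : (ν : Measure (ℕ → B)) {y | ∃ j : ℕ, y = shift^[j] x} = 1 := by
        rw [← ProbabilityMeasure.ennreal_coeFn_eq_coeFn_toMeasure, hfull, ENNReal.coe_one]
      exact (prob_compl_eq_zero_iff (finite_orbit hp hx).measurableSet).2 this
    rw [lintegral_congr_ae (g := fun _ =>
      ∑ j ∈ Finset.range p, S.indicator (1 : (ℕ → B) → ENNReal) (shift^[j] x))]
    · simp
    · filter_upwards [hae] with y hy
      obtain ⟨i, rfl⟩ := hy
      exact sum_indicator_iterate_eq hx S i
  intro ν₁ h₁ ν₂ h₂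
  refine Subtype.ext (Measure.ext fun S hS => ?_)
  have := (key ν₁ h₁ S hS).trans (key ν₂ h₂ S hS).symm
  exact (ENNReal.mul_right_inj (by simpa using hp.ne') (by simp)).1 this

end Periodic

section Joinings

variable [MeasurableSpace B]

lemma dbarM_nonneg (μ ν : ProbabilityMeasure (ℕ → B)) : 0 ≤ dbarM μ ν :=
  Real.sInf_nonneg (by rintro _ ⟨ξ, -, rfl⟩; exact ENNReal.toReal_nonneg)

lemma dbarM_le_of_isJoining {μ ν : ProbabilityMeasure (ℕ → B)}
    {ξ : Measure ((ℕ → B) × (ℕ → B))} (h : IsJoining ξ μ ν) :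
    dbarM μ ν ≤ (ξ {p | p.1 0 ≠ p.2 0}).toReal :=
  csInf_le ⟨0, by rintro _ ⟨ξ, -, rfl⟩; exact ENNReal.toReal_nonneg⟩ ⟨ξ, h, rfl⟩

lemma hausdist_singleton {Z : Type*} (d : Z → Z → ℝ) (a b : Z) : hausdist d {a} {b} = d a b := by
  simp [hausdist]

end Joinings

end Dynamics

lemma not_exists_Msigma_eq_singleton {B : Type} [Fintype B] [TopologicalSpace B]
    [DiscreteTopology B] [MeasurableSpace B] [MeasurableSingletonClass B]
    (hB : 2 ≤ Fintype.card B) {μ : ProbabilityMeasure (ℕ → B)}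
    (hμ : ∀ U : Set (ℕ → B), IsOpen U → U.Nonempty → 0 < μ U) :
    ¬ ∃ Z : Set (ℕ → B), ShiftSpace Z ∧ Msigma Z = {μ} := by
  have : BorelSpace B := ⟨by
    rw [borel_eq_top_of_discrete]
    exact eq_top_iff.2 fun s _ => (Set.toFinite s).measurableSet⟩
  rintro ⟨Z, ⟨-, hclosed, -⟩, hZ⟩
  have hμZ : μ ∈ Msigma Z := hZ ▸ rfl
  have huniv : Z = Set.univ := by
    by_contra hne
    have hpos := hμ Zᶜ hclosed.isOpen_compl (Set.nonempty_compl.2 hne)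
    have hone : (μ : Measure (ℕ → B)) Z = 1 := by
      rw [← ProbabilityMeasure.ennreal_coeFn_eq_coeFn_toMeasure, hμZ.2, ENNReal.coe_one]
    have hzero := (prob_compl_eq_zero_iff hclosed.measurableSet).2 hone
    rw [← ProbabilityMeasure.ennreal_coeFn_eq_coeFn_toMeasure] at hzero
    exact hpos.ne' (by exact_mod_cast hzero)
  have hconst : ∀ a : B, (μ : Measure (ℕ → B)) = Measure.dirac fun _ => a := by
    intro a
    have hmem : (⟨Measure.dirac fun _ => a, inferInstance⟩ : ProbabilityMeasure (ℕ → B)) ∈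
        Msigma Z := by
      constructor
      · simp only [invariantPM, ProbabilityMeasure.coe_mk]
        rw [Measure.map_dirac' measurable_shift]
        rfl
      · rw [huniv]
        exact ProbabilityMeasure.coeFn_univ _
    have heq : _ = μ := Set.mem_singleton_iff.1 (hZ ▸ hmem)
    exact (congrArg ProbabilityMeasure.toMeasure heq).symm
  obtain ⟨a, b, hab⟩ := Fintype.one_lt_card_iff.1 hB
  have heq := (hconst a).symm.trans (hconst b)
  exact hab (congrFun (dirac_eq_dirac_iff.1 heq) 0)

section OdometerFactor

variable {B : Type} [MeasurableSpace B] [MeasurableSpace ℤ_[2]] [BorelSpace ℤ_[2]]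
  {m : Measure ℤ_[2]} [IsProbabilityMeasure m] [m.IsAddLeftInvariant]

lemma measurable_itinerary {g : ℤ_[2] → B} (hg : Measurable g) : Measurable (itinerary g) :=
  measurable_pi_lambda _ fun n => hg.comp (measurable_add_const (n : ℤ_[2]))

/-- The law of the itinerary of a random point of the odometer. -/
noncomputable def itineraryLaw (m : Measure ℤ_[2]) [IsProbabilityMeasure m] {g : ℤ_[2] → B}
    (hg : Measurable g) : ProbabilityMeasure (ℕ → B) :=
  ⟨m.map (itinerary g), Measure.isProbabilityMeasure_map (measurable_itinerary hg).aemeasurable⟩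

lemma ergodicPM_itineraryLaw [m.InnerRegular] {g : ℤ_[2] → B} (hg : Measurable g) :
    ErgodicPM (itineraryLaw m hg) :=
  ((measurable_itinerary hg).measurePreserving m).ergodic_of_ergodic_semiconj
    (ergodic_one_add m) measurable_shift fun ω => (shift_itinerary g ω).symm

lemma invariantPM_itineraryLaw [m.InnerRegular] {g : ℤ_[2] → B} (hg : Measurable g) :
    invariantPM (itineraryLaw m hg) :=
  (ergodicPM_itineraryLaw hg).toMeasurePreserving.map_eq

lemma isJoining_map_itinerary {g h : ℤ_[2] → B} (hg : Measurable g) (hh : Measurable h) :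
    IsJoining (m.map fun ω => (itinerary g ω, itinerary h ω)) (itineraryLaw m hg)
      (itineraryLaw m hh) := by
  have hG := measurable_itinerary hg
  have hH := measurable_itinerary hh
  refine ⟨?_, ?_, ?_⟩
  · rw [Measure.map_map (measurable_shift.prodMap measurable_shift) (hG.prodMk hH)]
    conv_rhs => rw [← (measurePreserving_add_left m 1).map_eq]
    rw [Measure.map_map (hG.prodMk hH) (measurable_const_add 1)]
    congr 1
    funext ω
    simp [shift_itinerary]
  · rw [Measure.map_map measurable_fst (hG.prodMk hH)]
    rfl
  · rw [Measure.map_map measurable_snd (hG.prodMk hH)]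
    rfl

lemma dbarM_itineraryLaw_le [MeasurableEq B] {g h : ℤ_[2] → B}
    (hg : Measurable g) (hh : Measurable h) :
    dbarM (itineraryLaw m hg) (itineraryLaw m hh) ≤ (m {ω | g ω ≠ h ω}).toReal := by
  refine (dbarM_le_of_isJoining (isJoining_map_itinerary hg hh)).trans_eq ?_
  rw [Measure.map_apply ((measurable_itinerary hg).prodMk (measurable_itinerary hh))]
  · simp [itinerary, Set.preimage]
  · exact (measurableSet_eq_fun ((measurable_pi_apply 0).comp measurable_fst)
      ((measurable_pi_apply 0).comp measurable_snd)).compl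

lemma itineraryLaw_mem_Msigma_orbit [MeasurableSingletonClass B] [m.InnerRegular]
    {g : ℤ_[2] → B} (hgm : Measurable g) {N : ℕ}
    (hg : ∀ ω z, g (ω + 2 ^ N * z) = g ω) :
    itineraryLaw m hgm ∈ Msigma {y | ∃ j : ℕ, y = shift^[j] (itinerary g 0)} := by
  refine ⟨invariantPM_itineraryLaw hgm, ?_⟩
  have hpre : itinerary g ⁻¹' {y | ∃ j : ℕ, y = shift^[j] (itinerary g 0)} = Set.univ := by
    refine Set.eq_univ_of_forall fun ω => ?_
    obtain ⟨j, z, rfl⟩ := exists_eq_natCast_add_two_pow_mul N ω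
    refine ⟨j, ?_⟩
    funext n
    rw [shift_iterate_apply]
    simp only [itinerary]
    rw [← hg (0 + _) z]
    congr 1
    push_cast
    ring
  have hmeas :=
    (finite_orbit (by positivity) (shift_iterate_itinerary_of_periodic hg)).measurableSet
  have : (itineraryLaw m hgm : Measure (ℕ → B))
      {y | ∃ j : ℕ, y = shift^[j] (itinerary g 0)} = 1 := by
    change m.map (itinerary g) _ = 1
    rw [Measure.map_apply (measurable_itinerary hgm) hmeas, hpre, measure_univ]
  rw [← ProbabilityMeasure.ennreal_coeFn_eq_coeFn_toMeasure] at this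
  exact_mod_cast this

lemma itineraryLaw_patternLim_pos [TopologicalSpace B] [SecondCountableTopology B] [Inhabited B]
    (hm : Measurable
      (patternLim (fun k => TopologicalSpace.denseSeq (ℕ → B) k.unpair.1) (default : B)))
    {U : Set (ℕ → B)} (hU : IsOpen U) (hne : U.Nonempty) : 0 < itineraryLaw m hm U := by
  obtain ⟨_, hxU, n, rfl⟩ := 
    (TopologicalSpace.denseRange_denseSeq (ℕ → B)).inter_open_nonempty U hU hne
  obtain ⟨I, u, hu, hsub⟩ := isOpen_pi_iff.1 hU _ hxU
  set k := Nat.pair n (I.sup id + 1) with hk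
  have hcyl : {ω : ℤ_[2] | ∀ i < k, patternLim
      (fun k => TopologicalSpace.denseSeq (ℕ → B) k.unpair.1) (default : B) (ω + i)
        = TopologicalSpace.denseSeq (ℕ → B) k.unpair.1 i}
      ⊆ itinerary (patternLim
        (fun k => TopologicalSpace.denseSeq (ℕ → B) k.unpair.1) (default : B)) ⁻¹' U := by
    intro ω hω
    refine hsub fun i hi => ?_
    have hik : i < k := by
      have h1 : i ≤ I.sup id := Finset.le_sup (f := id) hi
      have h2 : I.sup id + 1 ≤ k := Nat.right_le_pair _ _
      omega
    have := hω i hik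
    rw [hk, Nat.unpair_pair] at this
    simp only [itinerary]
    rw [this]
    exact (hu i hi).2
  have hpos := (measure_patternLim_eq_pos
    (fun k => TopologicalSpace.denseSeq (ℕ → B) k.unpair.1) (default : B) m k).trans_le
      ((measure_mono hcyl).trans (Measure.le_map_apply (measurable_itinerary hm).aemeasurable U))
  rw [pos_iff_ne_zero]
  intro h0
  refine hpos.ne' ?_
  change (itineraryLaw m hm : Measure (ℕ → B)) U = 0
  rw [← ProbabilityMeasure.ennreal_coeFn_eq_coeFn_toMeasure, h0, ENNReal.coe_zero]

end OdometerFactor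

/-- there is a sequence of periodic-orbit shift spaces whose simplices of
invariant measures converge in `d̄_M^H` to a singleton `{μ}` with `μ` ergodic and fully
supported; in particular `{μ}` is not the simplex of invariant measures of any shift
space. -/
theorem statement9 (hA : 2 ≤ Fintype.card A) :
    ∃ (X : ℕ → Set (ℕ → A)) (μ : ProbabilityMeasure (ℕ → A)),
      (∀ k : ℕ, ShiftSpace (X k) ∧
        ∃ (x : ℕ → A) (p : ℕ), 0 < p ∧ shift^[p] x = x ∧
          X k = {y | ∃ j : ℕ, y = shift^[j] x}) ∧
      invariantPM μ ∧ ErgodicPM μ ∧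
      (∀ U : Set (ℕ → A), IsOpen U → U.Nonempty → 0 < μ U) ∧
      Filter.Tendsto (fun k => hausdist dbarM (Msigma (X k)) {μ}) Filter.atTop (nhds 0) ∧
      ¬ ∃ Z : Set (ℕ → A), ShiftSpace Z ∧ Msigma Z = {μ} := by
  borelize ℤ_[2]
  set m : Measure ℤ_[2] := Measure.addHaarMeasure ⊤ with hm
  have : IsProbabilityMeasure m := ⟨Measure.addHaarMeasure_self⟩
  set W : ℕ → ℕ → A := fun k => TopologicalSpace.denseSeq (ℕ → A) k.unpair.1 with hW
  have hg : ∀ k, Measurable (pattern W default k) := measurable_pattern W default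
  have hf : Measurable (patternLim W default) := measurable_patternLim W default
  have hper : ∀ k ω z, pattern W default k (ω + 2 ^ (4 * k ^ 2) * z) = pattern W default k ω :=
    fun k => pattern_add_two_pow_mul W default le_rfl
  have horbit : ∀ k, shift^[2 ^ (4 * k ^ 2)] (itinerary (pattern W default k) 0)
      = itinerary (pattern W default k) 0 := fun k => shift_iterate_itinerary_of_periodic (hper k)
  have hsupp : ∀ U : Set (ℕ → A), IsOpen U → U.Nonempty → 0 < itineraryLaw m hf U :=
    fun U hU hne => itineraryLaw_patternLim_pos hf hU hne
  refine ⟨fun k => {y | ∃ j : ℕ, y = shift^[j] (itinerary (pattern W default k) 0)},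
    itineraryLaw m hf, fun k => ⟨shiftSpace_orbit (by positivity) (horbit k), _, _, by positivity,
      horbit k, rfl⟩, invariantPM_itineraryLaw hf, ergodicPM_itineraryLaw hf, hsupp, ?_,
    not_exists_Msigma_eq_singleton hA hsupp⟩
  have hsingle : ∀ k, Msigma {y | ∃ j : ℕ, y = shift^[j] (itinerary (pattern W default k) 0)}
      = {itineraryLaw m (hg k)} := fun k =>
    (Msigma_orbit_subsingleton (by positivity) (horbit k)).eq_singleton_of_mem
      (itineraryLaw_mem_Msigma_orbit (hg k) (hper k))
  simp_rw [hsingle, hausdist_singleton]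
  have hbound : ∀ k, dbarM (itineraryLaw m (hg k)) (itineraryLaw m hf) ≤ 2 * 2⁻¹ ^ k := fun k => by
    refine (dbarM_itineraryLaw_le (hg k) hf).trans ?_
    have := ENNReal.toReal_mono (by finiteness) (measure_pattern_ne_patternLim_le W default m k)
    simpa using this
  refine squeeze_zero (fun k => dbarM_nonneg _ _) hbound ?_
  simpa using (tendsto_pow_atTop_nhds_zero_of_lt_one (r := (2⁻¹ : ℝ)) (by norm_num)
    (by norm_num)).const_mul 2

end DbarPaper
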